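/- The homotopy category of ℤ-indexed cochain complexes of injective Λ-left-modules (the full subcategory of K(Λ) on complexes all of whose components are injective Λ-modules) is idempotent complete: every idempotent endomorphism in this category splits, i.e., for every object X and every morphism e : X → X with e ∘ e = e there exist an object X₁ and morphisms x₁ : X₁ → X and x : X → X₁ with x₁ ∘ x = e and x ∘ x₁ = id. -/

import Mathlib

open CategoryTheory CategoryTheory.Limits

/-!
A complex of injectives is a complex over the additive category `A` of injective objects, which has
countable products, so it suffices to split idempotents in the homotopy category of `A`. That
category is pretriangulated, hence every split epimorphism has a kernel (its fibre), and it has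
countable products, computed degreewise. Under these two conditions idempotents split, by a trick
of Freyd: for an idempotent `e` of `X`, the endomorphism `(xₙ)ₙ ↦ (xₙ - e xₙ₊₁)ₙ` of `X^ℕ` is a
split epimorphism, and its kernel consists of the constant sequences with value in the image of `e`.
-/

section FreydTrick

variable {T : Type*} [Category* T] [Preadditive T] [HasProductsOfShape ℕ T] {X : T}

/-- Freyd's endomorphism `(xₙ)ₙ ↦ (xₙ - e xₙ₊₁)ₙ` of the countable power of `X`, whose kernel is the
image of `e` when `e` is idempotent. -/
noncomputable def subShift (e : X ⟶ X) : (∏ᶜ fun _ : ℕ ↦ X) ⟶ ∏ᶜ fun _ : ℕ ↦ X :=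
  Pi.lift fun n ↦ Pi.π _ n - Pi.π _ (n + 1) ≫ e

lemma subShift_π (e : X ⟶ X) (n : ℕ) :
    subShift e ≫ Pi.π _ n = Pi.π _ n - Pi.π _ (n + 1) ≫ e :=
  Pi.lift_π _ n

lemma comp_subShift_eq_zero_iff {A : T} {f : A ⟶ ∏ᶜ fun _ : ℕ ↦ X} {e : X ⟶ X}
    (he : e ≫ e = e) :
    f ≫ subShift e = 0 ↔ ∃ g : A ⟶ X, g ≫ e = g ∧ f = Pi.lift fun _ ↦ g := by
  constructor
  · intro hf
    have hf_succ (n : ℕ) : f ≫ Pi.π _ n = f ≫ Pi.π _ (n + 1) ≫ e := by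
      simpa [subShift_π, sub_eq_zero] using congr($hf ≫ Pi.π _ n)
    have hf_e (n : ℕ) : f ≫ Pi.π _ n ≫ e = f ≫ Pi.π _ n := by
      rw [← Category.assoc, hf_succ, Category.assoc, Category.assoc, he]
    have hf_const (n : ℕ) : f ≫ Pi.π _ n = f ≫ Pi.π _ 0 := by
      induction n with
      | zero => rfl
      | succ n ih => rw [← ih, hf_succ n, hf_e]
    exact ⟨f ≫ Pi.π _ 0, by rw [Category.assoc, hf_e],
      Pi.hom_ext _ _ fun n ↦ by rw [Pi.lift_π, hf_const]⟩
  · rintro ⟨g, hg, rfl⟩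
    exact Pi.hom_ext _ _ fun n ↦ by simp [subShift_π, hg]

/- Applying `e` to `xₙ - e xₙ₊₁ = yₙ` gives `e xₙ₊₁ = e xₙ - e yₙ`; the section below is the
solution `x` of this system with `e x₀ = 0`. -/
lemma isSplitEpi_subShift {e : X ⟶ X} (he : e ≫ e = e) : IsSplitEpi (subShift e) where
  exists_splitEpi := ⟨{
    section_ := Pi.lift fun n ↦ Pi.π _ n - ∑ j ∈ Finset.range (n + 1), Pi.π _ j ≫ e
    id := Pi.hom_ext _ _ fun n ↦ by
      simp [subShift_π, Preadditive.sub_comp, Preadditive.sum_comp, Finset.sum_range_succ, he]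
      abel }⟩

theorem isIdempotentComplete_of_hasKernel_of_isSplitEpi
    (hT : ∀ ⦃Y Z : T⦄ (f : Y ⟶ Z) [IsSplitEpi f], HasKernel f) : IsIdempotentComplete T where
  idempotents_split X e he := by
    have := isSplitEpi_subShift he
    have := hT (subShift e)
    obtain ⟨g, hg, hι⟩ := (comp_subShift_eq_zero_iff he).1 (kernel.condition (subShift e))
    let r : X ⟶ kernel (subShift e) := kernel.lift _ (Pi.lift fun _ ↦ e)
      ((comp_subShift_eq_zero_iff he).2 ⟨e, he, rfl⟩)
    have hr : r ≫ kernel.ι (subShift e) = Pi.lift fun _ ↦ e := kernel.lift_ι _ _ _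
    have hg₀ : g = kernel.ι (subShift e) ≫ Pi.π _ 0 := by rw [hι, Pi.lift_π]
    refine ⟨kernel (subShift e), g, r, ?_, ?_⟩
    · rw [← cancel_mono (kernel.ι (subShift e)), Category.assoc, hr, Category.id_comp, hι]
      exact Pi.hom_ext _ _ fun n ↦ by simp [hg]
    · rw [hg₀, reassoc_of% hr, Pi.lift_π]

end FreydTrick

section Pretriangulated

open Pretriangulated

variable {T : Type*} [Category* T] [HasZeroObject T] [HasShift T ℤ] [Preadditive T]
  [∀ n : ℤ, (shiftFunctor T n).Additive] [Pretriangulated T]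

lemma hasKernel_of_epi {Y Z : T} (f : Y ⟶ Z) [Epi f] : HasKernel f := by
  obtain ⟨F, i, δ, hT⟩ := distinguished_cocone_triangle₁ f
  have : Mono i := Triangle.mono₁ _ hT (Triangle.mor₃_eq_zero_of_epi₂ _ hT ‹Epi f›)
  exact ⟨⟨KernelFork.ofι i (comp_distTriang_mor_zero₁₂ _ hT),
    KernelFork.IsLimit.ofι' i _ fun g hg ↦
      ⟨_, (Triangle.coyoneda_exact₂ _ hT g hg).choose_spec.symm⟩⟩⟩

theorem isIdempotentComplete_of_pretriangulated [HasProductsOfShape ℕ T] :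
    IsIdempotentComplete T :=
  isIdempotentComplete_of_hasKernel_of_isSplitEpi fun _ _ f _ ↦ hasKernel_of_epi f

end Pretriangulated

section HomotopyCategory

open HomologicalComplex HomotopyCategory

variable {C ι J : Type*} [Category* C] [Preadditive C] {c : ComplexShape ι}

/-- A chain homotopy into a degreewise product of complexes, assembled from homotopies between
the components. -/
noncomputable def homotopyOfComponents {K : J → HomologicalComplex C c}
    {L P : HomologicalComplex C c} {π : ∀ j, P ⟶ K j}
    (hP : ∀ i, IsLimit (Fan.mk (P.X i) fun j ↦ (π j).f i)) {f g : L ⟶ P}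
    (h : ∀ j, Homotopy (f ≫ π j) (g ≫ π j)) : Homotopy f g where
  hom i i' := Fan.IsLimit.lift (hP i') fun j ↦ (h j).hom i i'
  zero i i' hi := Fan.IsLimit.hom_ext (hP i') _ _ fun j ↦ by
    rw [Fan.IsLimit.fac, (h j).zero i i' hi, zero_comp]
  comm i := Fan.IsLimit.hom_ext (hP i) _ _ fun j ↦ by
    have hom_π (i i' : ι) : Fan.IsLimit.lift (hP i') (fun j ↦ (h j).hom i i') ≫ (π j).f i' =
        (h j).hom i i' := Fan.IsLimit.fac (hP i') _ j
    change f.f i ≫ (π j).f i = (_ + _ + _) ≫ (π j).f i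
    simp only [Preadditive.add_comp, ← dNext_comp_right, ← prevD_comp_right, hom_π]
    exact (h j).comm i

variable [HasProductsOfShape J C]

lemma quotient_pi_hom_ext {K : J → HomologicalComplex C c} {Z : HomotopyCategory C c}
    {f g : Z ⟶ (quotient C c).obj (∏ᶜ K)}
    (h : ∀ j, f ≫ (quotient C c).map (Pi.π K j) = g ≫ (quotient C c).map (Pi.π K j)) : f = g := by
  obtain ⟨L, rfl⟩ := quotient_obj_surjective Z
  obtain ⟨f, rfl⟩ := (quotient C c).map_surjective f
  obtain ⟨g, rfl⟩ := (quotient C c).map_surjective g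
  exact eq_of_homotopy _ _ <| homotopyOfComponents
    (fun i ↦ isLimitFanMkObjOfIsLimit (eval C c i) _ _ (productIsProduct K))
    fun j ↦ homotopyOfEq _ _ (by simpa only [Functor.map_comp] using h j)

lemma exists_quotient_pi_lift {K : J → HomologicalComplex C c} {Z : HomotopyCategory C c}
    (f : ∀ j, Z ⟶ (quotient C c).obj (K j)) :
    ∃ g : Z ⟶ (quotient C c).obj (∏ᶜ K), ∀ j, g ≫ (quotient C c).map (Pi.π K j) = f j := by
  obtain ⟨L, rfl⟩ := quotient_obj_surjective Z
  choose f' hf' using fun j ↦ (quotient C c).map_surjective (f j)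
  exact ⟨(quotient C c).map (Pi.lift f'), fun j ↦ by rw [← Functor.map_comp, Pi.lift_π, hf']⟩

/-- The product of complexes is also their product in the homotopy category. -/
noncomputable def isLimitQuotientFan (K : J → HomologicalComplex C c) :
    IsLimit (Fan.mk ((quotient C c).obj (∏ᶜ K)) fun j ↦ (quotient C c).map (Pi.π K j)) :=
  have exists_lift (s : Fan fun j ↦ (quotient C c).obj (K j)) := exists_quotient_pi_lift s.proj
  Fan.IsLimit.mk _ (fun s ↦ (exists_lift s).choose) (fun s ↦ (exists_lift s).choose_spec)
    fun s _ hm ↦ quotient_pi_hom_ext fun j ↦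
      (hm j).trans ((exists_lift s).choose_spec j).symm

instance hasProductsOfShape_homotopyCategory : HasProductsOfShape J (HomotopyCategory C c) where
  has_limit F :=
    have : HasLimit (Discrete.functor (F.obj ∘ Discrete.mk)) :=
      ⟨⟨_, isLimitQuotientFan fun j ↦ (F.obj ⟨j⟩).as⟩⟩
    hasLimit_of_iso Discrete.natIsoFunctor.symm

theorem isIdempotentComplete_homotopyCategory {A : Type*} [Category* A] [Preadditive A]
    [HasCountableProducts A] : IsIdempotentComplete (HomotopyCategory A (ComplexShape.up ℤ)) :=
  have : HasZeroObject A := hasZeroObject_of_hasTerminal_object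
  have : HasBinaryBiproducts A := .of_hasBinaryProducts
  isIdempotentComplete_of_pretriangulated

end HomotopyCategory

section FullSubcategory

lemma exists_splitting_obj {D E : Type*} [Category* D] [Category* E] [IsIdempotentComplete D]
    (F : D ⥤ E) [F.Full] [F.Faithful] {X : D} {e : F.obj X ⟶ F.obj X} (he : e ≫ e = e) :
    ∃ (Y : D) (i : F.obj Y ⟶ F.obj X) (r : F.obj X ⟶ F.obj Y), r ≫ i = e ∧ i ≫ r = 𝟙 _ := by
  obtain ⟨e, rfl⟩ := F.map_surjective e
  obtain ⟨Y, i, r, hir, hri⟩ := IsIdempotentComplete.idempotents_split X e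
    (F.map_injective (by rw [F.map_comp, he]))
  exact ⟨Y, F.map i, F.map r, by rw [← F.map_comp, hri], by rw [← F.map_comp, hir, F.map_id]⟩

variable {C : Type*} [Category* C] [Preadditive C] {P : ObjectProperty C}

lemma exists_mapHomotopyCategory_ι_obj_eq {ι : Type*} {c : ComplexShape ι}
    {X : HomotopyCategory C c} (hX : ∀ i, P (X.as.X i)) :
    ∃ Y, (P.ι.mapHomotopyCategory c).obj Y = X :=
  ⟨(HomotopyCategory.quotient _ c).obj
    { X i := ⟨X.as.X i, hX i⟩
      d i j := ObjectProperty.homMk (X.as.d i j)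
      shape i j h := by ext; exact X.as.shape i j h
      d_comp_d' i j k _ _ := by ext; exact X.as.d_comp_d i j k }, rfl⟩

end FullSubcategory

theorem homotopyCategory_of_injectives_idempotent_complete_general
    {C : Type*} [Category* C] [Preadditive C] (P : ObjectProperty C)
    [HasCountableProducts P.FullSubcategory] (X : HomotopyCategory C (ComplexShape.up ℤ))
    (hX : ∀ i : ℤ, P (X.as.X i)) (e : X ⟶ X) (he : e ≫ e = e) :
    ∃ (X₁ : HomotopyCategory C (ComplexShape.up ℤ)) (_ : ∀ i : ℤ, P (X₁.as.X i))
      (x₁ : X₁ ⟶ X) (x : X ⟶ X₁), x ≫ x₁ = e ∧ x₁ ≫ x = 𝟙 X₁ := by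
  have := isIdempotentComplete_homotopyCategory (A := P.FullSubcategory)
  obtain ⟨Y, rfl⟩ := exists_mapHomotopyCategory_ι_obj_eq hX
  obtain ⟨Y₁, x₁, x, hx⟩ := exists_splitting_obj (P.ι.mapHomotopyCategory _) he
  exact ⟨_, fun i ↦ (Y₁.as.X i).property, x₁, x, hx⟩

instance hasCountableProducts_injectiveObject {C : Type*} [Category* C] [HasCountableProducts C] :
    HasCountableProducts (InjectiveObject C) where
  out _ _ := inferInstance

/-- The homotopy category of complexes of injective `Λ`-modules (the full subcategory of
`K(Λ)` on complexes all of whose components are injective) is idempotent complete: every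
idempotent endomorphism `e : X ⟶ X` splits via an object `X₁` of the subcategory. -/
theorem homotopyCategory_of_injectives_idempotent_complete
    (k : Type) [Field k] (Λ : Type) [Ring Λ] [Algebra k Λ] [FiniteDimensional k Λ]
    (X : HomotopyCategory (ModuleCat.{0} Λ) (ComplexShape.up ℤ))
    (hX : ∀ i : ℤ, Injective (X.as.X i))
    (e : X ⟶ X) (he : e ≫ e = e) :
    ∃ (X₁ : HomotopyCategory (ModuleCat.{0} Λ) (ComplexShape.up ℤ))
      (_ : ∀ i : ℤ, Injective (X₁.as.X i))
      (x₁ : X₁ ⟶ X) (x : X ⟶ X₁),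
      x ≫ x₁ = e ∧ x₁ ≫ x = 𝟙 X₁ :=
  homotopyCategory_of_injectives_idempotent_complete_general (isInjective _) X hX e he
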